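/- Let k be odd with k ∣ n. Then every bichromatic travelling salesman tour of the 2n chunked equidistant points on the circle has total length at least n·k + 2n + n/k (that is, n(k + 2 + 1/k)). -/

import Mathlib

/-- The cyclic successor of an index. -/
def nextIdx {m : ℕ} (i : Fin m) : Fin m := ⟨(i.val + 1) % m, Nat.mod_lt _ i.pos⟩

/-- Point `i` of the chunked configuration is red iff `⌊i/k⌋` is even
(the points form alternately colored chunks of `k` consecutive points). -/
def redPt (k : ℕ) {m : ℕ} (i : Fin m) : Bool := decide ((i.val / k) % 2 = 0)

/-- The length of the edge between points `i` and `j` of the `2n` equidistant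
points on the circle: one more than the hop distance along the circle. -/
def edgeLen (n : ℕ) (i j : Fin (2 * n)) : ℕ :=
  min (((j : ℕ) + 2 * n - (i : ℕ)) % (2 * n)) (((i : ℕ) + 2 * n - (j : ℕ)) % (2 * n)) + 1

/-- `v` is a bichromatic travelling salesman tour: a cyclic enumeration of all
`2n` points in which cyclically consecutive points have different colors. -/
def IsBichromaticTour (n k : ℕ) (v : Fin (2 * n) → Fin (2 * n)) : Prop :=
  Function.Bijective v ∧ ∀ i : Fin (2 * n), redPt k (v i) ≠ redPt k (v (nextIdx i))

/-- The total length of a tour. -/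
def tourLength (n : ℕ) (v : Fin (2 * n) → Fin (2 * n)) : ℕ :=
  ∑ i : Fin (2 * n), edgeLen n (v i) (v (nextIdx i))

/-- Twice the distance from a point to the nearest boundary of its chunk. -/
def bdist (k : ℕ) (x : ℕ) : ℕ := min (2 * (x % k) + 1) (2 * k - 2 * (x % k) - 1)

theorem sum_chunk (m : ℕ) :
    ∑ p ∈ Finset.range (2 * m + 1), min (2 * p + 1) (2 * (2 * m + 1) - 2 * p - 1)
      = 2 * m ^ 2 + 2 * m + 1 := by
  induction m with
  | zero => simp
  | succ m ih =>
    rw [show 2 * (m + 1) + 1 = (2 * m + 1 + 1) + 1 by ring, Finset.sum_range_succ,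
      Finset.sum_range_succ']
    have h : ∀ p ∈ Finset.range (2 * m + 1),
        min (2 * (p + 1) + 1) (2 * (2 * m + 1 + 1 + 1) - 2 * (p + 1) - 1)
          = min (2 * p + 1) (2 * (2 * m + 1) - 2 * p - 1) + 2 := by
      intro p hp
      have := Finset.mem_range.1 hp
      omega
    rw [Finset.sum_congr rfl h, Finset.sum_add_distrib, ih]
    simp only [Finset.sum_const, Finset.card_range, smul_eq_mul]
    have h1 : min (2 * 0 + 1) (2 * (2 * m + 1 + 1 + 1) - 2 * 0 - 1) = 1 := by omega
    have h2 : min (2 * (2 * m + 1 + 1) + 1) (2 * (2 * m + 1 + 1 + 1) - 2 * (2 * m + 1 + 1) - 1)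
      = 1 := by omega
    rw [h1, h2]
    ring

theorem sum_periodic (k M : ℕ) (f : ℕ → ℕ) :
    ∑ x ∈ Finset.range (k * M), f (x % k) = M * ∑ p ∈ Finset.range k, f p := by
  induction M with
  | zero => simp
  | succ M ih =>
    rw [Nat.mul_succ, Finset.sum_range_add, ih, Nat.succ_mul]
    congr 1
    refine Finset.sum_congr rfl fun p hp => ?_
    rw [Nat.mul_add_mod, Nat.mod_eq_of_lt (Finset.mem_range.1 hp)]

theorem nextIdx_inj {m : ℕ} : Function.Injective (nextIdx : Fin m → Fin m) := by
  intro a b h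
  have h' : (a.val + 1) % m = (b.val + 1) % m := congrArg Fin.val h
  have h2 : a.val % m = b.val % m := Nat.ModEq.add_right_cancel' 1 h'
  rw [Nat.mod_eq_of_lt a.2, Nat.mod_eq_of_lt b.2] at h2
  exact Fin.ext h2

theorem gap_bound (k M x y : ℕ) (hk : 1 ≤ k) (hxy : x / k < y / k) (hy : y < k * M) :
    bdist k x + bdist k y ≤ 2 * (y - x) ∧ bdist k x + bdist k y ≤ 2 * (k * M - (y - x)) := by
  have ex := Nat.div_add_mod x k
  have ey := Nat.div_add_mod y k
  have lx := Nat.mod_lt x hk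
  have ly := Nat.mod_lt y hk
  have h1 : k * (x / k + 1) ≤ k * (y / k) := Nat.mul_le_mul_left k hxy
  have h2 : k * (y / k + 1) ≤ k * M :=
    Nat.mul_le_mul_left k (Nat.div_lt_of_lt_mul hy)
  rw [Nat.mul_add, Nat.mul_one] at h1 h2
  unfold bdist
  constructor <;> omega

theorem edge_bound (n k : ℕ) (hk : 1 ≤ k) (hdvd : k ∣ n) (i j : Fin (2 * n))
    (h : redPt k i ≠ redPt k j) :
    bdist k i + bdist k j + 2 ≤ 2 * edgeLen n i j := by
  obtain ⟨c, rfl⟩ := hdvd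
  have hM : k * (2 * c) = 2 * (k * c) := by ring
  have hi := i.2
  have hj := j.2
  have hne : i.val / k ≠ j.val / k := by
    intro e
    exact h (by simp [redPt, e])
  unfold edgeLen
  generalize i.val = x at *
  generalize j.val = y at *
  have key : ∀ x y : ℕ, x < y → y < 2 * (k * c) → (y + 2 * (k * c) - x) % (2 * (k * c)) = y - x ∧
      (x + 2 * (k * c) - y) % (2 * (k * c)) = 2 * (k * c) - (y - x) := by
    intro x y h1 h2
    constructor
    · rw [show y + 2 * (k * c) - x = (y - x) + 2 * (k * c) by omega, Nat.add_mod_right,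
        Nat.mod_eq_of_lt (by omega)]
    · rw [Nat.mod_eq_of_lt (by omega)]; omega
  rcases lt_or_gt_of_ne hne with hl | hl
  · have hlt : x < y := lt_of_not_ge fun hc => absurd (Nat.div_le_div_right (c := k) hc) (by omega)
    obtain ⟨a, b⟩ := gap_bound k (2 * c) x y hk hl (by omega)
    obtain ⟨e1, e2⟩ := key x y hlt hj
    rw [e1, e2]; rw [hM] at b; omega
  · have hlt : y < x := lt_of_not_ge fun hc => absurd (Nat.div_le_div_right (c := k) hc) (by omega)
    obtain ⟨a, b⟩ := gap_bound k (2 * c) y x hk hl (by omega)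
    obtain ⟨e1, e2⟩ := key y x hlt hi
    rw [e1, e2]; rw [hM] at b; omega

/-- For odd chunk size `k` dividing `n`, every bichromatic travelling salesman
tour of the `2n` chunked equidistant points on the circle has total length at
least `n·k + 2n + n/k`. -/
theorem tsp_chunked_circle_odd_lower
    (n k : ℕ) (hn : 1 ≤ n) (hk : 1 ≤ k) (hdvd : k ∣ n) (hko : Odd k) :
    ∀ v : Fin (2 * n) → Fin (2 * n), IsBichromaticTour n k v →
      n * k + 2 * n + n / k ≤ tourLength n v := by
  intro v hv
  obtain ⟨hb, hc⟩ := hv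
  have hsum : ∑ i : Fin (2 * n), bdist k i = n * k + n / k := by
    rw [Fin.sum_univ_eq_sum_range (fun x => bdist k x) (2 * n)]
    obtain ⟨c, rfl⟩ := hdvd
    obtain ⟨m, rfl⟩ := hko
    rw [Nat.mul_div_cancel_left c hk, show 2 * ((2 * m + 1) * c) = (2 * m + 1) * (2 * c) by ring]
    have := sum_periodic (2 * m + 1) (2 * c)
      (fun p => min (2 * p + 1) (2 * (2 * m + 1) - 2 * p - 1))
    simp only [bdist]
    rw [this, sum_chunk]
    ring
  have s1 : ∑ i : Fin (2 * n), bdist k (v i) = n * k + n / k := by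
    rw [← hsum]
    exact hb.sum_comp (fun i : Fin (2 * n) => bdist k i)
  have s2 : ∑ i : Fin (2 * n), bdist k (v (nextIdx i)) = n * k + n / k := by
    rw [← s1]
    exact (Finite.injective_iff_bijective.1 nextIdx_inj).sum_comp
      (fun i : Fin (2 * n) => bdist k (v i))
  have hle := Finset.sum_le_sum fun (i : Fin (2 * n)) (_ : i ∈ Finset.univ) =>
    edge_bound n k hk hdvd (v i) (v (nextIdx i)) (hc i)
  rw [Finset.sum_add_distrib, Finset.sum_add_distrib, s1, s2, ← Finset.mul_sum] at hle
  simp only [Finset.sum_const, Finset.card_univ, Fintype.card_fin, smul_eq_mul] at hle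
  unfold tourLength
  omega
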